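/- Let p ≥ 2 and let g : ℝ^n × ℝ^m → ℝ be p times continuously differentiable with L_p-Lipschitz p-th derivative, and let M ≥ √2 · p · L_p. Fix (x,y) ∈ ℝ^n × ℝ^m and define Ω_{(x,y),p,M}(x̂,ŷ) = Φ_{(x,y),p}(x̂,ŷ) + (M(√2)^{p−1}/(p+1)!)‖x̂ − x‖₂^{p+1} − (M(√2)^{p−1}/(p+1)!)‖ŷ − y‖₂^{p+1}. Suppose (x̃,ỹ) satisfies Ω_{(x,y),p,M}(x̃, y') ≤ Ω_{(x,y),p,M}(x̃, ỹ) for all y' ∈ ℝ^m (ỹ maximizes Ω in its second argument at x̃). Then Ω_{(x,y),p,M}(x̃,ỹ) − g(x̃, y) ≥ (M/(p·(p+1)!)) · ‖x̃ − x‖₂^{p+1}. -/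

import Mathlib

/-- The point of `ℝⁿ × ℝᵐ` (with the Euclidean/`L²` product structure) with coordinates
`(x, y)`. -/
noncomputable def mkZ {n m : ℕ} (x : EuclideanSpace ℝ (Fin n)) (y : EuclideanSpace ℝ (Fin m)) :
    WithLp 2 (EuclideanSpace ℝ (Fin n) × EuclideanSpace ℝ (Fin m)) :=
  (WithLp.equiv 2 (EuclideanSpace ℝ (Fin n) × EuclideanSpace ℝ (Fin m))).symm (x, y)

/-- The `p`-th order Taylor polynomial `Φ_{z,p}(ẑ) = Σ_{i=0}^p (1/i!) ∇ⁱ g(z)[ẑ − z]ⁱ`. -/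
noncomputable def taylorPoly {n m : ℕ} (p : ℕ)
    (g : WithLp 2 (EuclideanSpace ℝ (Fin n) × EuclideanSpace ℝ (Fin m)) → ℝ)
    (z zh : WithLp 2 (EuclideanSpace ℝ (Fin n) × EuclideanSpace ℝ (Fin m))) : ℝ :=
  ∑ i ∈ Finset.range (p + 1),
    (1 / (Nat.factorial i : ℝ)) * iteratedFDeriv ℝ i g z (fun _ => zh - z)

/-- The regularized Taylor model
`Ω_{(x,y),p,M}(x̂,ŷ) = Φ_{(x,y),p}(x̂,ŷ) + (M(√2)^{p−1}/(p+1)!)‖x̂ − x‖^{p+1}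
− (M(√2)^{p−1}/(p+1)!)‖ŷ − y‖^{p+1}`. -/
noncomputable def omegaModel {n m : ℕ} (p : ℕ) (M : ℝ)
    (g : WithLp 2 (EuclideanSpace ℝ (Fin n) × EuclideanSpace ℝ (Fin m)) → ℝ)
    (x : EuclideanSpace ℝ (Fin n)) (y : EuclideanSpace ℝ (Fin m)) :
    WithLp 2 (EuclideanSpace ℝ (Fin n) × EuclideanSpace ℝ (Fin m)) → ℝ :=
  fun zh =>
    taylorPoly p g (mkZ x y) zh
      + M * Real.sqrt 2 ^ (p - 1) / (Nat.factorial (p + 1) : ℝ)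
          * ‖(WithLp.equiv 2 (EuclideanSpace ℝ (Fin n) × EuclideanSpace ℝ (Fin m)) zh).1 - x‖ ^ (p + 1)
      - M * Real.sqrt 2 ^ (p - 1) / (Nat.factorial (p + 1) : ℝ)
          * ‖(WithLp.equiv 2 (EuclideanSpace ℝ (Fin n) × EuclideanSpace ℝ (Fin m)) zh).2 - y‖ ^ (p + 1)

/-!
At the comparison point `(x̃, y)` the concave regularizer of `Ω` vanishes, and the Taylor remainder
of `g` is at most `L_p / (p+1)! · ‖x̃ - x‖^(p+1)`, because only the first coordinate has moved. Hence
`Ω(x̃, y) - g(x̃, y) ≥ (M (√2)^(p-1) - L_p) / (p+1)! · ‖x̃ - x‖^(p+1)`, and maximality of `ỹ` bounds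
`Ω(x̃, ỹ)` below by `Ω(x̃, y)`. Since `p ≥ 2`, already `2 L_p ≤ M` gives
`M / p + L_p ≤ M ≤ M (√2)^(p-1)`.

Since `∇^p g` is only Lipschitz, the remainder bound is not an estimate on a `(p+1)`-st derivative.
It comes from induction on the order: on a line the remainder of `f` is an antiderivative of that of
`f'`, and each integration turns `t ^ k / k!` into `t ^ (k+1) / (k+1)!`.
-/

open Set
open scoped Nat NNReal ENNReal

section Taylor

variable {E F : Type*} [NormedAddCommGroup E] [NormedSpace ℝ E] [NormedAddCommGroup F]
  [NormedSpace ℝ F]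

theorem norm_sub_taylorWithinEval_le_of_norm_iteratedDeriv_sub_le {n : ℕ} {f : ℝ → F} {a C : ℝ}
    (hf : ContDiff ℝ n f)
    (hC : ∀ t, a ≤ t → ‖iteratedDeriv n f t - iteratedDeriv n f a‖ ≤ C * (t - a)) {t : ℝ}
    (ht : a ≤ t) :
    ‖f t - taylorWithinEval f n univ a t‖ ≤ C * ((t - a) ^ (n + 1) / (n + 1)!) := by
  induction n generalizing f t with
  | zero => simpa using hC t ht
  | succ n ih =>
    have hf' : ContDiff ℝ n (deriv f) := ContDiff.iterate_deriv' n 1 hf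
    have hderiv (s : ℝ) : HasDerivAt (fun s ↦ f s - taylorWithinEval f (n + 1) univ a s)
        (deriv f s - taylorWithinEval (deriv f) n univ a s) s := by
      have hfs := (hf.differentiable (by simp) s).hasDerivAt
      simpa only [derivWithin_univ] using hfs.fun_sub
        (hasDerivAt_taylorWithinEval_succ (s := univ) f n)
    have hbound (s : ℝ) : HasDerivAt (fun s ↦ C * ((s - a) ^ (n + 2) / (n + 2)!))
        (C * ((s - a) ^ (n + 1) / (n + 1)!)) s := by
      have hpow := ((hasDerivAt_id s).sub_const a).pow (n + 2)
      refine ((hpow.div_const _).const_mul C).congr_deriv ?_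
      simp only [Nat.factorial_succ (n + 1), id_eq]
      push_cast
      field_simp
      ring
    refine image_norm_le_of_norm_deriv_right_le_deriv_boundary
      (fun s _ ↦ (hderiv s).continuousAt.continuousWithinAt)
      (fun s _ ↦ (hderiv s).hasDerivWithinAt) (by simp) hbound
      (fun s hs ↦ ih hf' (fun r hr ↦ ?_) hs.1) ⟨ht, le_rfl⟩
    simpa only [iteratedDeriv_succ'] using hC r hr

theorem iteratedDeriv_comp_add_smul {𝕜 E F : Type*} [NontriviallyNormedField 𝕜]
    [NormedAddCommGroup E] [NormedSpace 𝕜 E] [NormedAddCommGroup F] [NormedSpace 𝕜 F] {n : ℕ}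
    {f : E → F} (hf : ContDiff 𝕜 n f) (z v : E) (t : 𝕜) :
    iteratedDeriv n (fun s : 𝕜 ↦ f (z + s • v)) t =
      iteratedFDeriv 𝕜 n f (z + t • v) fun _ ↦ v := by
  induction n generalizing t with
  | zero => simp
  | succ n ih =>
    rw [iteratedDeriv_succ, funext (ih hf.of_succ)]
    exact hf.contDiffAt.deriv_fderiv_add_smul

/-- The Taylor polynomial of order `n` of `f` at `z`, evaluated at the point `w` (not at the
increment `w - z`), for maps between normed spaces. -/
noncomputable def taylorApprox (n : ℕ) (f : E → F) (z w : E) : F :=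
  ∑ k ∈ Finset.range (n + 1), (k ! : ℝ)⁻¹ • iteratedFDeriv ℝ k f z fun _ ↦ w - z

theorem taylorWithinEval_comp_add_smul {n : ℕ} {f : E → F} (hf : ContDiff ℝ n f) (z v : E) :
    taylorWithinEval (fun s : ℝ ↦ f (z + s • v)) n univ 0 1 = taylorApprox n f z (z + v) := by
  rw [taylor_within_apply, taylorApprox]
  refine Finset.sum_congr rfl fun k hk ↦ ?_
  have hkn : k ≤ n := Finset.mem_range_succ_iff.1 hk
  rw [iteratedDerivWithin_univ, iteratedDeriv_comp_add_smul (hf.of_le (by exact_mod_cast hkn))]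
  simp

theorem norm_sub_taylorApprox_le {n : ℕ} {f : E → F} {L : ℝ≥0}
    (hL : LipschitzWith L (iteratedFDeriv ℝ n f)) (hf : ContDiff ℝ n f) (z w : E) :
    ‖f w - taylorApprox n f z w‖ ≤ L / (n + 1)! * ‖w - z‖ ^ (n + 1) := by
  obtain ⟨v, rfl⟩ : ∃ v, w = z + v := ⟨w - z, by simp⟩
  set u : ℝ → F := fun s ↦ f (z + s • v)
  have hu : ContDiff ℝ n u := by fun_prop
  have huL (t : ℝ) (ht : 0 ≤ t) :
      ‖iteratedDeriv n u t - iteratedDeriv n u 0‖ ≤ L * ‖v‖ ^ (n + 1) * (t - 0) := by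
    rw [iteratedDeriv_comp_add_smul hf, iteratedDeriv_comp_add_smul hf, ← sub_apply,
      zero_smul, add_zero]
    calc
      _ ≤ ‖iteratedFDeriv ℝ n f (z + t • v) - iteratedFDeriv ℝ n f z‖ * ‖v‖ ^ n := by
        simpa only [Finset.prod_const, Finset.card_fin] using
          (iteratedFDeriv ℝ n f (z + t • v) - iteratedFDeriv ℝ n f z).le_opNorm fun _ ↦ v
      _ ≤ L * ‖z + t • v - z‖ * ‖v‖ ^ n := by
        gcongr
        exact hL.norm_sub_le _ _
      _ = L * ‖v‖ ^ (n + 1) * (t - 0) := by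
        rw [add_sub_cancel_left, norm_smul_of_nonneg ht]
        ring
  have h := norm_sub_taylorWithinEval_le_of_norm_iteratedDeriv_sub_le hu huL zero_le_one
  rw [taylorWithinEval_comp_add_smul hf] at h
  simpa [u, div_eq_mul_inv, mul_right_comm] using h

end Taylor

theorem div_add_le_mul_sqrt_two_pow {p : ℕ} (hp : 2 ≤ p) {L M : ℝ} (hM₀ : 0 ≤ M)
    (hM : 2 * L ≤ M) : M / p + L ≤ M * √2 ^ (p - 1) := by
  have hp' : (2 : ℝ) ≤ p := by exact_mod_cast hp
  calc
    M / p + L ≤ M / 2 + M / 2 := by gcongr; linarith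
    _ = M := add_halves M
    _ ≤ M * √2 ^ (p - 1) :=
      le_mul_of_one_le_right hM₀ (one_le_pow₀ (Real.one_le_sqrt.2 one_le_two))

theorem two_mul_le_sqrt_two_mul_mul {p : ℕ} (hp : 2 ≤ p) {L : ℝ} (hL : 0 ≤ L) :
    2 * L ≤ √2 * p * L := by
  have hp' : (2 : ℝ) ≤ p := by exact_mod_cast hp
  gcongr
  exact hp'.trans (le_mul_of_one_le_left p.cast_nonneg (Real.one_le_sqrt.2 one_le_two))

section SaddleTaylorModel

variable {E F : Type*} [NormedAddCommGroup E] [NormedSpace ℝ E] [NormedAddCommGroup F]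
  [NormedSpace ℝ F] {q : ℝ≥0∞} [Fact (1 ≤ q)]

/-- The Taylor model of order `p` of `g` at `z`, regularized for a min-max problem: the penalty
`c ‖·‖ ^ (p + 1)` is added in the minimization variable and subtracted in the maximization
variable. The product may carry any `L^q` norm; `omegaModel` is the case `q = 2`,
`c = M (√2)^(p-1) / (p+1)!`. -/
noncomputable def saddleTaylorModel (p : ℕ) (c : ℝ) (g : WithLp q (E × F) → ℝ)
    (z w : WithLp q (E × F)) : ℝ :=
  taylorApprox p g z w + c * ‖w.fst - z.fst‖ ^ (p + 1) - c * ‖w.snd - z.snd‖ ^ (p + 1)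

theorem le_saddleTaylorModel_sub {p : ℕ} {L : ℝ≥0} {g : WithLp q (E × F) → ℝ}
    (hL : LipschitzWith L (iteratedFDeriv ℝ p g)) (hg : ContDiff ℝ p g) (c : ℝ) (x x' : E)
    (y : F) :
    (c - L / (p + 1)!) * ‖x' - x‖ ^ (p + 1) ≤
      saddleTaylorModel p c g (.toLp q (x, y)) (.toLp q (x', y)) - g (.toLp q (x', y)) := by
  have hnorm : ‖WithLp.toLp q (x', y) - WithLp.toLp q (x, y)‖ = ‖x' - x‖ := by
    rw [← WithLp.toLp_sub, Prod.mk_sub_mk, sub_self, WithLp.norm_toLp_fst]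
  have htaylor := norm_sub_taylorApprox_le hL hg (.toLp q (x, y)) (.toLp q (x', y))
  rw [hnorm] at htaylor
  have hupper := (Real.le_norm_self _).trans htaylor
  simp only [saddleTaylorModel, WithLp.toLp_fst, WithLp.toLp_snd, sub_self, norm_zero,
    zero_pow p.succ_ne_zero, mul_zero, sub_zero]
  linarith

theorem model_minus_g_lower_bound_general {p : ℕ} (hp : 2 ≤ p) {L : ℝ≥0} {M : ℝ}
    (hM : 2 * L ≤ M) {g : WithLp q (E × F) → ℝ} (hg : ContDiff ℝ p g)
    (hL : LipschitzWith L (iteratedFDeriv ℝ p g)) {x x' : E} {y y' : F}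
    (hy' : saddleTaylorModel p (M * √2 ^ (p - 1) / (p + 1)!) g (.toLp q (x, y)) (.toLp q (x', y)) ≤
      saddleTaylorModel p (M * √2 ^ (p - 1) / (p + 1)!) g (.toLp q (x, y)) (.toLp q (x', y'))) :
    M / (p * (p + 1)!) * ‖x' - x‖ ^ (p + 1) ≤
      saddleTaylorModel p (M * √2 ^ (p - 1) / (p + 1)!) g (.toLp q (x, y)) (.toLp q (x', y')) -
        g (.toLp q (x', y)) := by
  have hM₀ : 0 ≤ M := (by positivity : (0 : ℝ) ≤ 2 * L).trans hM
  have hcoeff : M / (p * (p + 1)!) ≤ M * √2 ^ (p - 1) / (p + 1)! - L / (p + 1)! := by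
    rw [← div_div, ← sub_div]
    gcongr
    exact le_sub_iff_add_le.2 (div_add_le_mul_sqrt_two_pow hp hM₀ hM)
  calc
    _ ≤ (M * √2 ^ (p - 1) / (p + 1)! - L / (p + 1)!) * ‖x' - x‖ ^ (p + 1) := by gcongr
    _ ≤ saddleTaylorModel p _ g (.toLp q (x, y)) (.toLp q (x', y)) - g (.toLp q (x', y)) :=
      le_saddleTaylorModel_sub hL hg _ x x' y
    _ ≤ _ := sub_le_sub_right hy' _

end SaddleTaylorModel

theorem omegaModel_eq_saddleTaylorModel {n m : ℕ} (p : ℕ) (M : ℝ)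
    (g : WithLp 2 (EuclideanSpace ℝ (Fin n) × EuclideanSpace ℝ (Fin m)) → ℝ)
    (x : EuclideanSpace ℝ (Fin n)) (y : EuclideanSpace ℝ (Fin m)) :
    omegaModel p M g x y = saddleTaylorModel p (M * √2 ^ (p - 1) / (p + 1)!) g (mkZ x y) := by
  ext w
  simp only [omegaModel, taylorPoly, saddleTaylorModel, taylorApprox, one_div, smul_eq_mul]
  rfl

/-- Inequality (18) in the paper's saddle-point version of Lemma 5.2: if `M ≥ √2 p L_p` and
`ỹ` maximizes the regularized Taylor model `Ω_{(x,y),p,M}(x̃, ·)`, then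
`Ω_{(x,y),p,M}(x̃,ỹ) − g(x̃, y) ≥ (M/(p (p+1)!)) ‖x̃ − x‖^{p+1}`. -/
theorem model_minus_g_lower_bound {n m : ℕ} (p : ℕ) (hp : 2 ≤ p)
    (Lp M : ℝ) (hLp : 0 < Lp) (hM : Real.sqrt 2 * p * Lp ≤ M)
    (g : WithLp 2 (EuclideanSpace ℝ (Fin n) × EuclideanSpace ℝ (Fin m)) → ℝ)
    (hg : ContDiff ℝ (p : ℕ∞) g)
    (hLip : ∀ z₁ z₂, ‖iteratedFDeriv ℝ p g z₁ - iteratedFDeriv ℝ p g z₂‖ ≤ Lp * ‖z₁ - z₂‖)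
    (x xt : EuclideanSpace ℝ (Fin n)) (y yt : EuclideanSpace ℝ (Fin m))
    (hmax : ∀ y' : EuclideanSpace ℝ (Fin m),
      omegaModel p M g x y (mkZ xt y') ≤ omegaModel p M g x y (mkZ xt yt)) :
    omegaModel p M g x y (mkZ xt yt) - g (mkZ xt y)
      ≥ M / (p * (Nat.factorial (p + 1) : ℝ)) * ‖xt - x‖ ^ (p + 1) := by
  lift Lp to ℝ≥0 using hLp.le
  simp only [omegaModel_eq_saddleTaylorModel] at hmax ⊢
  exact model_minus_g_lower_bound_general hp ((two_mul_le_sqrt_two_mul_mul hp Lp.2).trans hM) hg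
    (lipschitzWith_iff_norm_sub_le.2 hLip) (hmax y)
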